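/- (Theorem 2, power against local alternatives.) Let q ≥ 2, θ_0 ∈ ℝ, δ > 0, and σ, σ_1, …, σ_q > 0. Let θ̂_n be random vectors in ℝ^{q+1} such that √n (θ̂_n − θ_0·1_{q+1}) converges in distribution on ℝ^{q+1} to the normal law with mean vector Δ = (δ, 0, …, 0) and covariance matrix diag(σ², σ_1², …, σ_q²), where 1_{q+1} is the vector of ones. Then for every w ∈ (0,1), lim_{n→∞} E φ(θ̂_n, w) exists and satisfies lim_{n→∞} E φ(θ̂_n, w) ≥ 2^q · sup_{t ≥ 0} Φ( δ/σ − ((1+w)/(1−w)) t ) ∏_{k=1}^q ( Φ((σ/σ_k) t) − 1/2 ) > 0. -/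

import Mathlib

/-!
When the total of the entries is fixed, `T` increases strictly with the sum of the first two, so
`T(s) = T(s^▽)` exactly when the first two entries of `s` dominate all the others. For
`s = S(x, w)` this says that `x` lies in the cone `x₀ₖ ≤ (1 - w) x₁ + w x̄₀`, `k = 1, …, q`.
The cone is invariant under `x ↦ c (x - a 1)` with `c > 0`, so `E φ(θ̂ₙ, w)` is the probability
that `√n (θ̂ₙ - θ₀ 1)` lies in it. The cone is convex, its frontier is therefore Lebesgue-null,
hence null for the normal limit law, and the portmanteau theorem identifies the limit as the
normal probability of the cone.

For the lower bound, the cone contains for every `t ≥ 0` the box `x₁ ≥ σ t (1 + w) / (1 - w)`,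
`|x₀ₖ| ≤ σ t`, whose normal probability is `2^q` times the `t`-th term of the supremum.
-/

open MeasureTheory ProbabilityTheory Filter Set

noncomputable section

/-- Standard normal cumulative distribution function `Φ`. -/
def Phi (x : ℝ) : ℝ := ((gaussianReal 0 1) (Set.Iic x)).toReal

/-- Standard normal density `ϕ`. -/
def stdNormalPDF (y : ℝ) : ℝ := gaussianPDFReal 0 1 y

/-- Mean of the `q` control coordinates of `x = (x₁, x₀₁, …, x₀q)`. -/
def xbar (q : ℕ) (x : Fin (q + 1) → ℝ) : ℝ := (∑ k : Fin q, x k.succ) / q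

/-- The weighted, recentered vector `S(x, w)`. -/
def Svec (q : ℕ) (w : ℝ) (x : Fin (q + 1) → ℝ) : Fin (q + 2) → ℝ := fun j =>
  if j.val = 0 then (1 + w) * (x 0 - xbar q x)
  else if j.val = 1 then (1 - w) * (x 0 - xbar q x)
  else x ⟨j.val - 1, by have := j.isLt; omega⟩ - xbar q x

/-- The decreasing rearrangement `s^▽` of a tuple `s`. -/
def rearr {n : ℕ} (s : Fin n → ℝ) : Fin n → ℝ := fun i => (s ∘ Tuple.sort s) i.rev

/-- The difference-of-means statistic `T(s)`. -/
def Tstat (q : ℕ) (s : Fin (q + 2) → ℝ) : ℝ :=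
  (s 0 + s 1) / 2 - (∑ k : Fin q, s ⟨k.val + 2, by have := k.isLt; omega⟩) / q

/-- The rearrangement test `φ(x, w) = 1{T(S(x,w)) = T(S(x,w)^▽)}`. -/
def phiTest (q : ℕ) (x : Fin (q + 1) → ℝ) (w : ℝ) : ℝ :=
  if Tstat q (Svec q w x) = Tstat q (rearr (Svec q w x)) then 1 else 0

/-- The size bound `ξ_q(w, ρ)`. -/
def xiBound (q : ℕ) (w ρ : ℝ) : ℝ :=
  (1 / 2) ^ (q + 1)
    + (∫ y in Set.Ioi (0 : ℝ), (Phi ((1 - w) * ρ * y)) ^ (q - 1) * stdNormalPDF y)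
    + sInf ((fun t : ℝ => Phi (Real.sqrt ((q : ℝ) - 1) * w * t) ^ (q - 1)
        + 2 * Phi (-(q : ℝ) * t)) '' Set.Ioi 0)

/-- The lower bound on power from Proposition 1. -/
def powerBound (q : ℕ) (w δ σ : ℝ) (σs : Fin q → ℝ) : ℝ :=
  2 ^ q * sSup ((fun t : ℝ => Phi (δ / σ - ((1 + w) / (1 - w)) * t) *
      ∏ k : Fin q, (Phi ((σ / σs k) * t) - 1 / 2)) '' Set.Ici 0)

/-! ### Rearrangement of tuples -/

/-- Each of the first two entries of the tuple `s` is at least as large as every later entry. In the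
test, the first two entries are the treated ones. -/
def LeadingPairDominates {α : Type*} [LE α] {n : ℕ} (s : Fin (n + 2) → α) : Prop :=
  ∀ k : Fin n, s k.succ.succ ≤ s 0 ∧ s k.succ.succ ≤ s 1

lemma leadingPairDominates_of_antitone {α : Type*} [Preorder α] {n : ℕ} {s : Fin (n + 2) → α}
    (hs : Antitone s) : LeadingPairDominates s :=
  fun k => ⟨hs (Fin.zero_le _), hs (Fin.succ_le_succ_iff.2 (Fin.zero_le k.succ))⟩

lemma LeadingPairDominates.add_le_add_of_lt {α : Type*} [AddCommMonoid α] [PartialOrder α]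
    [IsOrderedAddMonoid α] {n : ℕ} {s : Fin (n + 2) → α} (hs : LeadingPairDominates s)
    {i j : Fin (n + 2)} (hij : i < j) : s i + s j ≤ s 0 + s 1 := by
  obtain rfl | ⟨j, rfl⟩ := Fin.eq_zero_or_eq_succ j
  · exact absurd hij (Fin.not_lt_zero i)
  obtain rfl | ⟨i, rfl⟩ := Fin.eq_zero_or_eq_succ i
  · obtain rfl | ⟨k, rfl⟩ := Fin.eq_zero_or_eq_succ j
    · exact le_rfl
    · exact add_le_add le_rfl (hs k).2
  obtain ⟨k, rfl⟩ := Fin.exists_succ_eq_of_ne_zero (Fin.ne_zero_of_lt (Fin.succ_lt_succ_iff.1 hij))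
  obtain rfl | ⟨l, rfl⟩ := Fin.eq_zero_or_eq_succ i
  · rw [add_comm]
    exact add_le_add (hs k).1 le_rfl
  · exact add_le_add (hs l).1 (hs k).2

lemma leadingPairDominates_iff_forall_add_le_add {α : Type*} [AddCommMonoid α] [PartialOrder α]
    [IsOrderedCancelAddMonoid α] {n : ℕ} {s : Fin (n + 2) → α} :
    LeadingPairDominates s ↔ ∀ i j, i ≠ j → s i + s j ≤ s 0 + s 1 := by
  refine ⟨fun hs i j hij => ?_, fun h k => ⟨?_, ?_⟩⟩
  · rcases hij.lt_or_gt with hlt | hgt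
    · exact hs.add_le_add_of_lt hlt
    · rw [add_comm]
      exact hs.add_le_add_of_lt hgt
  · exact le_of_add_le_add_right (h k.succ.succ 1 (by simp [Fin.ext_iff]))
  · exact le_of_add_le_add_left (h 0 k.succ.succ (by simp [Fin.ext_iff]))

lemma antitone_rearr {n : ℕ} (s : Fin n → ℝ) : Antitone (rearr s) :=
  fun _ _ hij => Tuple.monotone_sort s (Fin.rev_le_rev.2 hij)

lemma exists_perm_rearr_eq_comp {n : ℕ} (s : Fin n → ℝ) :
    ∃ π : Equiv.Perm (Fin n), rearr s = s ∘ π :=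
  ⟨Fin.revPerm.trans (Tuple.sort s), rfl⟩

lemma sum_rearr {n : ℕ} (s : Fin n → ℝ) : ∑ i, rearr s i = ∑ i, s i := by
  obtain ⟨π, hπ⟩ := exists_perm_rearr_eq_comp s
  rw [hπ]
  exact Equiv.sum_comp π s

lemma isGreatest_rearr_zero_add_rearr_one {n : ℕ} (s : Fin (n + 2) → ℝ) :
    IsGreatest {y | ∃ i j, i ≠ j ∧ s i + s j = y} (rearr s 0 + rearr s 1) := by
  obtain ⟨π, hπ⟩ := exists_perm_rearr_eq_comp s
  refine ⟨⟨π 0, π 1, π.injective.ne (by simp), by simp only [hπ, Function.comp_apply]⟩, ?_⟩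
  rintro _ ⟨i, j, hij, rfl⟩
  have h := leadingPairDominates_iff_forall_add_le_add.1
    (leadingPairDominates_of_antitone (antitone_rearr s))
    (π.symm i) (π.symm j) (π.symm.injective.ne hij)
  simpa only [hπ, Function.comp_apply, Equiv.apply_symm_apply] using h

lemma leadingPairDominates_iff_add_eq_rearr {n : ℕ} {s : Fin (n + 2) → ℝ} :
    LeadingPairDominates s ↔ s 0 + s 1 = rearr s 0 + rearr s 1 := by
  obtain ⟨⟨i, j, hij, hmem⟩, hub⟩ := isGreatest_rearr_zero_add_rearr_one s
  rw [leadingPairDominates_iff_forall_add_le_add]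
  refine ⟨fun h => (hub ⟨0, 1, by simp, rfl⟩).antisymm (hmem ▸ h i j hij), fun h i j hij => ?_⟩
  rw [h]
  exact hub ⟨i, j, hij, rfl⟩

lemma Tstat_eq_sum (q : ℕ) (s : Fin (q + 2) → ℝ) :
    Tstat q s = (1 / 2 + (q : ℝ)⁻¹) * (s 0 + s 1) - (∑ i, s i) / q := by
  have hsum : ∑ i, s i = s 0 + (s 1 + ∑ k : Fin q, s ⟨k.val + 2, by have := k.isLt; omega⟩) := by
    rw [Fin.sum_univ_succ, Fin.sum_univ_succ]
    rfl
  rw [Tstat, hsum]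
  ring

lemma Tstat_eq_Tstat_rearr_iff {q : ℕ} {s : Fin (q + 2) → ℝ} :
    Tstat q s = Tstat q (rearr s) ↔ LeadingPairDominates s := by
  have hcoef : (1 / 2 + (q : ℝ)⁻¹) ≠ 0 := by positivity
  rw [Tstat_eq_sum, Tstat_eq_sum, sum_rearr, sub_left_inj, mul_right_inj' hcoef,
    leadingPairDominates_iff_add_eq_rearr]

/-! ### The rejection cone -/

section Xbar

variable {q : ℕ} {x : Fin (q + 1) → ℝ} {c : ℝ}

lemma xbar_le_of_forall_le (hq : 0 < q) (h : ∀ k : Fin q, x k.succ ≤ c) : xbar q x ≤ c := by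
  rw [xbar, div_le_iff₀ (by exact_mod_cast hq), mul_comm]
  simpa using Finset.sum_le_card_nsmul Finset.univ (fun k : Fin q => x k.succ) c fun k _ => h k

lemma le_xbar_of_forall_le (hq : 0 < q) (h : ∀ k : Fin q, c ≤ x k.succ) : c ≤ xbar q x := by
  rw [xbar, le_div_iff₀ (by exact_mod_cast hq), mul_comm]
  simpa using Finset.card_nsmul_le_sum Finset.univ (fun k : Fin q => x k.succ) c fun k _ => h k

lemma xbar_add (x y : Fin (q + 1) → ℝ) : xbar q (x + y) = xbar q x + xbar q y := by
  simp only [xbar, Pi.add_apply, Finset.sum_add_distrib, add_div]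

lemma xbar_smul (c : ℝ) (x : Fin (q + 1) → ℝ) : xbar q (c • x) = c * xbar q x := by
  simp only [xbar, Pi.smul_apply, smul_eq_mul, ← Finset.mul_sum, mul_div_assoc]

lemma xbar_const (hq : 0 < q) (c : ℝ) : xbar q (fun _ => c) = c :=
  (xbar_le_of_forall_le hq fun _ => le_rfl).antisymm (le_xbar_of_forall_le hq fun _ => le_rfl)

lemma continuous_xbar : Continuous (xbar q) := by
  unfold xbar
  fun_prop

end Xbar

/-- The set of `x` at which, for `0 ≤ w < 1`, the rearrangement test rejects: the treated entry
`(1 - w) (x₁ - x̄₀)` of `S(x, w)` is at least every control entry `x₀ₖ - x̄₀`. -/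
def rejectionCone (q : ℕ) (w : ℝ) : Set (Fin (q + 1) → ℝ) :=
  {x | ∀ k : Fin q, x k.succ ≤ (1 - w) * x 0 + w * xbar q x}

section RejectionCone

variable {q : ℕ} {w : ℝ}

/-- Averaging the defining inequalities gives `x̄₀ ≤ (1 - w) x₁ + w x̄₀`. -/
lemma xbar_le_of_mem_rejectionCone (hq : 0 < q) (hw : w < 1) {x : Fin (q + 1) → ℝ}
    (hx : x ∈ rejectionCone q w) : xbar q x ≤ x 0 := by
  have havg := xbar_le_of_forall_le hq hx
  refine le_of_mul_le_mul_left ?_ (sub_pos.2 hw)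
  linarith

lemma leadingPairDominates_Svec_iff (hq : 0 < q) (hw₀ : 0 ≤ w) (hw₁ : w < 1)
    {x : Fin (q + 1) → ℝ} : LeadingPairDominates (Svec q w x) ↔ x ∈ rejectionCone q w := by
  have hS₀ : Svec q w x 0 = (1 + w) * (x 0 - xbar q x) := rfl
  have hS₁ : Svec q w x 1 = (1 - w) * (x 0 - xbar q x) := rfl
  have hS (k : Fin q) : Svec q w x k.succ.succ = x k.succ - xbar q x := rfl
  simp only [LeadingPairDominates, hS₀, hS₁, hS]
  refine ⟨fun h k => by linarith [(h k).2], fun hx k => ?_⟩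
  have hk : x k.succ - xbar q x ≤ (1 - w) * (x 0 - xbar q x) := by linarith [hx k]
  have hpos : 0 ≤ x 0 - xbar q x := sub_nonneg.2 (xbar_le_of_mem_rejectionCone hq hw₁ hx)
  exact ⟨hk.trans (mul_le_mul_of_nonneg_right (by linarith) hpos), hk⟩

lemma phiTest_eq_indicator (hq : 0 < q) (hw₀ : 0 ≤ w) (hw₁ : w < 1) (x : Fin (q + 1) → ℝ) :
    phiTest q x w = (rejectionCone q w).indicator 1 x := by
  classical
  simp only [phiTest, Tstat_eq_Tstat_rearr_iff, leadingPairDominates_Svec_iff hq hw₀ hw₁,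
    Set.indicator_apply, Pi.one_apply]

lemma affine_mem_rejectionCone_iff (hq : 0 < q) {c : ℝ} (hc : 0 < c) (a : ℝ)
    {x : Fin (q + 1) → ℝ} :
    (fun i => c * (x i - a)) ∈ rejectionCone q w ↔ x ∈ rejectionCone q w := by
  have hxbar : xbar q (fun i => c * (x i - a)) = c * (xbar q x - a) := by
    have hx : (fun i => c * (x i - a)) = c • (x + fun _ => -a) := by
      ext i
      simp [sub_eq_add_neg]
    rw [hx, xbar_smul, xbar_add, xbar_const hq, sub_eq_add_neg]
  refine forall_congr' fun k => ?_
  have hrhs : (1 - w) * (c * (x 0 - a)) + w * (c * (xbar q x - a))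
      = c * ((1 - w) * x 0 + w * xbar q x - a) := by ring
  rw [hxbar, hrhs, mul_le_mul_iff_right₀ hc, sub_le_sub_iff_right]

lemma isClosed_rejectionCone : IsClosed (rejectionCone q w) := by
  simp only [rejectionCone, Set.ofPred_forall]
  have hcont := continuous_xbar (q := q)
  exact isClosed_iInter fun k => isClosed_le (by fun_prop) (by fun_prop)

lemma convex_rejectionCone : Convex ℝ (rejectionCone q w) := by
  intro x hx y hy a b ha hb _ k
  calc (a • x + b • y) k.succ
      = a * x k.succ + b * y k.succ := rfl
    _ ≤ a * ((1 - w) * x 0 + w * xbar q x) + b * ((1 - w) * y 0 + w * xbar q y) :=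
        add_le_add (mul_le_mul_of_nonneg_left (hx k) ha) (mul_le_mul_of_nonneg_left (hy k) hb)
    _ = (1 - w) * (a • x + b • y) 0 + w * xbar q (a • x + b • y) := by
        simp only [xbar_add, xbar_smul, Pi.add_apply, Pi.smul_apply, smul_eq_mul]
        ring

lemma pi_cons_Ici_Icc_subset_rejectionCone (hq : 0 < q) (hw₀ : 0 ≤ w) (hw₁ : w < 1) (r : ℝ) :
    Set.univ.pi (Fin.cons (Set.Ici ((1 + w) / (1 - w) * r)) fun _ => Set.Icc (-r) r :
      Fin (q + 1) → Set ℝ) ⊆ rejectionCone q w := by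
  intro x hx k
  rw [Set.mem_univ_pi] at hx
  have htreated : (1 + w) / (1 - w) * r ≤ x 0 := hx 0
  have hcontrol (j : Fin q) : x j.succ ∈ Set.Icc (-r) r := hx j.succ
  have hmean : -r ≤ xbar q x := le_xbar_of_forall_le hq fun j => (hcontrol j).1
  calc x k.succ
      ≤ r := (hcontrol k).2
    _ = (1 - w) * ((1 + w) / (1 - w) * r) + w * -r := by
        have : 1 - w ≠ 0 := (sub_pos.2 hw₁).ne'
        field_simp
        ring
    _ ≤ (1 - w) * x 0 + w * xbar q x :=
        add_le_add (mul_le_mul_of_nonneg_left htreated (sub_nonneg.2 hw₁.le))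
          (mul_le_mul_of_nonneg_left hmean hw₀)

end RejectionCone

/-! ### Weak convergence and null frontiers -/

lemma pi_fin_absolutelyContinuous {n : ℕ} {X : Fin n → Type*} [∀ i, MeasurableSpace (X i)]
    {μ ν : ∀ i, Measure (X i)} [∀ i, SigmaFinite (μ i)] [∀ i, SigmaFinite (ν i)]
    (h : ∀ i, μ i ≪ ν i) : Measure.pi μ ≪ Measure.pi ν := by
  induction n with
  | zero => rw [Measure.pi_of_empty μ, Measure.pi_of_empty ν]
  | succ n ih =>
    rw [← (measurePreserving_piFinSuccAbove μ 0).symm.map_eq,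
      ← (measurePreserving_piFinSuccAbove ν 0).symm.map_eq]
    exact ((h 0).prod (ih fun i => h _)).map (MeasurableEquiv.measurable _)

lemma pi_absolutelyContinuous {ι : Type*} [Fintype ι] {X : ι → Type*}
    [∀ i, MeasurableSpace (X i)] {μ ν : ∀ i, Measure (X i)} [∀ i, SigmaFinite (μ i)]
    [∀ i, SigmaFinite (ν i)] (h : ∀ i, μ i ≪ ν i) : Measure.pi μ ≪ Measure.pi ν := by
  let e := (Fintype.equivFin ι).symm
  rw [← (measurePreserving_piCongrLeft μ e).map_eq, ← (measurePreserving_piCongrLeft ν e).map_eq]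
  exact (pi_fin_absolutelyContinuous fun i => h (e i)).map (MeasurableEquiv.measurable _)

lemma tendsto_measureReal_preimage_of_null_frontier {Ω E ι : Type*} [MeasurableSpace Ω]
    {P : Measure Ω} [IsProbabilityMeasure P] [TopologicalSpace E] [MeasurableSpace E]
    [OpensMeasurableSpace E] [HasOuterApproxClosed E] {μ : Measure E} [IsProbabilityMeasure μ]
    {l : Filter ι} {X : ι → Ω → E} (hX : ∀ i, AEMeasurable (X i) P)
    (hconv : ∀ f : BoundedContinuousFunction E ℝ,
      Tendsto (fun i => ∫ ω, f (X i ω) ∂P) l (nhds (∫ x, f x ∂μ)))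
    {A : Set E} (hA : MeasurableSet A) (hfrontier : μ (frontier A) = 0) :
    Tendsto (fun i => P.real (X i ⁻¹' A)) l (nhds (μ.real A)) := by
  let law (i : ι) : ProbabilityMeasure E :=
    ⟨P.map (X i), Measure.isProbabilityMeasure_map (hX i)⟩
  have hlaw : Tendsto law l (nhds ⟨μ, inferInstance⟩) := by
    refine ProbabilityMeasure.tendsto_iff_forall_integral_tendsto.2 fun f => ?_
    refine (hconv f).congr fun i => ?_
    exact (integral_map (hX i) f.continuous.aestronglyMeasurable).symm
  have hmeasure := ProbabilityMeasure.tendsto_measure_of_null_frontier_of_tendsto' hlaw hfrontier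
  refine ((ENNReal.tendsto_toReal (measure_ne_top μ A)).comp hmeasure).congr fun i => ?_
  exact map_measureReal_apply_of_aemeasurable (hX i) hA

theorem tendsto_integral_phiTest {Ω : Type*} [MeasurableSpace Ω] {P : Measure Ω}
    [IsProbabilityMeasure P] {q : ℕ} (hq : 0 < q) {θ0 : ℝ} {μ : Measure (Fin (q + 1) → ℝ)}
    [IsProbabilityMeasure μ] (hμ : μ ≪ volume) {θhat : ℕ → Ω → Fin (q + 1) → ℝ}
    (hmeas : ∀ n, Measurable (θhat n))
    (hconv : ∀ f : BoundedContinuousFunction (Fin (q + 1) → ℝ) ℝ,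
      Tendsto (fun n : ℕ => ∫ ω, f (fun i => Real.sqrt n * (θhat n ω i - θ0)) ∂P) atTop
        (nhds (∫ x, f x ∂μ)))
    {w : ℝ} (hw₀ : 0 ≤ w) (hw₁ : w < 1) :
    Tendsto (fun n : ℕ => ∫ ω, phiTest q (θhat n ω) w ∂P) atTop
      (nhds (μ.real (rejectionCone q w))) := by
  have hcone : MeasurableSet (rejectionCone q w) := isClosed_rejectionCone.measurableSet
  refine (tendsto_measureReal_preimage_of_null_frontier (fun n => ?_) hconv hcone
    (hμ (convex_rejectionCone.addHaar_frontier volume))).congr' ?_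
  · have := hmeas n
    exact Measurable.aemeasurable (by fun_prop)
  -- For `n = 0` the rescaled estimator is identically `0`.
  filter_upwards [eventually_gt_atTop 0] with n hn
  have hsqrt : 0 < Real.sqrt n := Real.sqrt_pos.2 (by exact_mod_cast hn)
  have hpreimage : (fun ω i => Real.sqrt n * (θhat n ω i - θ0)) ⁻¹' rejectionCone q w
      = θhat n ⁻¹' rejectionCone q w :=
    Set.ext fun ω => affine_mem_rejectionCone_iff hq hsqrt θ0
  simp only [phiTest_eq_indicator hq hw₀ hw₁]
  rw [hpreimage]
  exact (integral_indicator_one (hmeas n hcone)).symm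

/-! ### Normal probabilities -/

lemma strictMono_measureReal_Iic {X : Type*} [LinearOrder X] [TopologicalSpace X]
    [OrderTopology X] [DenselyOrdered X] [MeasurableSpace X] [OpensMeasurableSpace X]
    (μ : Measure X) [IsFiniteMeasure μ] [μ.IsOpenPosMeasure] :
    StrictMono fun x => μ.real (Set.Iic x) := by
  intro a b hab
  have hpos : 0 < μ.real (Set.Ioo a b) :=
    ENNReal.toReal_pos ((Measure.measure_Ioo_pos μ).2 hab).ne' (measure_ne_top _ _)
  have hdisj : Disjoint (Set.Iic a) (Set.Ioo a b) :=
    Set.disjoint_left.2 fun x hxa hx => hx.1.not_ge hxa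
  calc μ.real (Set.Iic a)
      < μ.real (Set.Iic a) + μ.real (Set.Ioo a b) := lt_add_of_pos_right _ hpos
    _ = μ.real (Set.Iic a ∪ Set.Ioo a b) := (measureReal_union hdisj measurableSet_Ioo).symm
    _ ≤ μ.real (Set.Iic b) :=
        measureReal_mono (Set.union_subset (Set.Iic_subset_Iic.2 hab.le) fun x hx => hx.2.le)

lemma Phi_strictMono : StrictMono Phi := by
  have := (gaussianReal_absolutelyContinuous' 0 one_ne_zero).isOpenPosMeasure
  exact strictMono_measureReal_Iic (gaussianReal 0 1)

lemma Phi_pos (x : ℝ) : 0 < Phi x :=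
  ENNReal.toReal_nonneg.trans_lt (Phi_strictMono (sub_one_lt x))

lemma Phi_le_one (x : ℝ) : Phi x ≤ 1 := measureReal_le_one

lemma toNNReal_sq_ne_zero {s : ℝ} (hs : 0 < s) : (s ^ 2).toNNReal ≠ 0 :=
  (Real.toNNReal_pos.2 (pow_pos hs 2)).ne'

lemma gaussianReal_eq_map_sub_mul (m s : ℝ) :
    gaussianReal m (s ^ 2).toNNReal = (gaussianReal 0 1).map fun x => m - s * x := by
  have hcomp : (fun x => m - s * x) = (fun x => m - x) ∘ fun x => s * x := rfl
  rw [hcomp, ← Measure.map_map (by fun_prop) (by fun_prop), gaussianReal_map_const_mul,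
    gaussianReal_map_const_sub]
  congr 1
  · simp
  · ext
    simp [sq_nonneg]

lemma gaussianReal_real_Ici (m a : ℝ) {s : ℝ} (hs : 0 < s) :
    (gaussianReal m (s ^ 2).toNNReal).real (Set.Ici a) = Phi ((m - a) / s) := by
  have hpreimage : (fun x => m - s * x) ⁻¹' Set.Ici a = Set.Iic ((m - a) / s) := by
    ext x
    rw [Set.mem_preimage, Set.mem_Ici, Set.mem_Iic, le_div_iff₀' hs, le_sub_comm]
  rw [gaussianReal_eq_map_sub_mul, map_measureReal_apply (by fun_prop) measurableSet_Ici,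
    hpreimage]
  rfl

lemma gaussianReal_real_Icc (m : ℝ) {a b s : ℝ} (hab : a ≤ b) (hs : 0 < s) :
    (gaussianReal m (s ^ 2).toNNReal).real (Set.Icc a b)
      = Phi ((m - a) / s) - Phi ((m - b) / s) := by
  have := nullSingletonClass_gaussianReal (μ := m) (toNNReal_sq_ne_zero hs)
  rw [← Set.Ici_sdiff_Ioi, measureReal_sdiff (Set.Ioi_subset_Ici hab) measurableSet_Ioi,
    measureReal_congr (Ioi_ae_eq_Ici (a := b)), gaussianReal_real_Ici m a hs,
    gaussianReal_real_Ici m b hs]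

lemma Phi_neg (x : ℝ) : Phi (-x) = 1 - Phi x := by
  have := nullSingletonClass_gaussianReal (μ := 0) one_ne_zero
  have hIci := gaussianReal_real_Ici 0 x one_pos
  rw [one_pow, Real.toNNReal_one, zero_sub, div_one] at hIci
  rw [← hIci, ← measureReal_congr (Ioi_ae_eq_Ici (a := x)), ← Set.compl_Iic,
    probReal_compl_eq_one_sub measurableSet_Iic]
  rfl

lemma Phi_zero : Phi 0 = 1 / 2 := by
  have h := Phi_neg 0
  rw [neg_zero] at h
  linarith

lemma half_lt_Phi {x : ℝ} (hx : 0 < x) : 1 / 2 < Phi x :=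
  Phi_zero ▸ Phi_strictMono hx

lemma half_le_Phi {x : ℝ} (hx : 0 ≤ x) : 1 / 2 ≤ Phi x :=
  Phi_zero ▸ Phi_strictMono.monotone hx

lemma gaussianReal_real_Icc_neg_self {a s : ℝ} (ha : 0 ≤ a) (hs : 0 < s) :
    (gaussianReal 0 (s ^ 2).toNNReal).real (Set.Icc (-a) a) = 2 * (Phi (a / s) - 1 / 2) := by
  rw [gaussianReal_real_Icc 0 (neg_le_self ha) hs, zero_sub, zero_sub, neg_neg, neg_div, Phi_neg]
  ring

/-! ### The limit law and the power bound -/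

section LimitLaw

variable {q : ℕ} {w δ σ : ℝ} {σs : Fin q → ℝ}

/-- The normal law of the rescaled estimation error in the limit: independent coordinates with mean
vector `(δ, 0, …, 0)` and standard deviations `(σ, σ₁, …, σ_q)`. -/
def limitLaw (q : ℕ) (δ σ : ℝ) (σs : Fin q → ℝ) : Measure (Fin (q + 1) → ℝ) :=
  Measure.pi fun i : Fin (q + 1) =>
    gaussianReal ((Fin.cons δ (fun _ => 0) : Fin (q + 1) → ℝ) i)
      ((Fin.cons (σ ^ 2) (fun k => (σs k) ^ 2) : Fin (q + 1) → ℝ) i).toNNReal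

instance : IsProbabilityMeasure (limitLaw q δ σ σs) :=
  inferInstanceAs (IsProbabilityMeasure (Measure.pi _))

lemma limitLaw_absolutelyContinuous (hσ : 0 < σ) (hσs : ∀ k, 0 < σs k) :
    limitLaw q δ σ σs ≪ volume :=
  pi_absolutelyContinuous fun i => gaussianReal_absolutelyContinuous _ <|
    i.cases (toNNReal_sq_ne_zero hσ) fun k => toNNReal_sq_ne_zero (hσs k)

lemma limitLaw_real_pi_cons_Ici_Icc (hσ : 0 < σ) (hσs : ∀ k, 0 < σs k) (a : ℝ) {r : ℝ}
    (hr : 0 ≤ r) :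
    (limitLaw q δ σ σs).real
        (Set.univ.pi (Fin.cons (Set.Ici a) fun _ => Set.Icc (-r) r : Fin (q + 1) → Set ℝ))
      = Phi ((δ - a) / σ) * ∏ k, 2 * (Phi (r / σs k) - 1 / 2) := by
  rw [limitLaw, measureReal_def, Measure.pi_pi, ENNReal.toReal_prod, Fin.prod_univ_succ]
  simp only [Fin.cons_zero, Fin.cons_succ, ← measureReal_def]
  rw [gaussianReal_real_Ici δ a hσ]
  simp only [fun k => gaussianReal_real_Icc_neg_self hr (hσs k)]

/-- The function of `t` whose supremum over `t ≥ 0` enters `powerBound`. Up to the factor `2 ^ q` it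
is the `limitLaw`-probability of the box `x₁ ≥ σ t (1 + w) / (1 - w)`, `|x₀ₖ| ≤ σ t`. -/
def boxPower (q : ℕ) (w δ σ : ℝ) (σs : Fin q → ℝ) (t : ℝ) : ℝ :=
  Phi (δ / σ - ((1 + w) / (1 - w)) * t) * ∏ k : Fin q, (Phi ((σ / σs k) * t) - 1 / 2)

lemma powerBound_eq_sSup_boxPower :
    powerBound q w δ σ σs = 2 ^ q * sSup (boxPower q w δ σ σs '' Set.Ici 0) := rfl

lemma two_pow_mul_boxPower_le (hq : 0 < q) (hw₀ : 0 ≤ w) (hw₁ : w < 1) (hσ : 0 < σ)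
    (hσs : ∀ k, 0 < σs k) {t : ℝ} (ht : 0 ≤ t) :
    2 ^ q * boxPower q w δ σ σs t ≤ (limitLaw q δ σ σs).real (rejectionCone q w) := by
  have hδ : (δ - (1 + w) / (1 - w) * (σ * t)) / σ = δ / σ - (1 + w) / (1 - w) * t := by
    field_simp
  calc 2 ^ q * boxPower q w δ σ σs t
      = Phi ((δ - (1 + w) / (1 - w) * (σ * t)) / σ)
          * ∏ k, 2 * (Phi (σ * t / σs k) - 1 / 2) := by
        simp only [boxPower, hδ, mul_div_right_comm σ t, Finset.prod_mul_distrib,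
          Finset.prod_const, Finset.card_univ, Fintype.card_fin]
        ring
    _ = _ := (limitLaw_real_pi_cons_Ici_Icc hσ hσs _ (mul_nonneg hσ.le ht)).symm
    _ ≤ (limitLaw q δ σ σs).real (rejectionCone q w) :=
        measureReal_mono (pi_cons_Ici_Icc_subset_rejectionCone hq hw₀ hw₁ (σ * t))

lemma powerBound_le (hq : 0 < q) (hw₀ : 0 ≤ w) (hw₁ : w < 1) (hσ : 0 < σ)
    (hσs : ∀ k, 0 < σs k) :
    powerBound q w δ σ σs ≤ (limitLaw q δ σ σs).real (rejectionCone q w) := by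
  rw [powerBound_eq_sSup_boxPower, ← le_div_iff₀' (by positivity)]
  refine csSup_le (Set.nonempty_Ici.image _) ?_
  rintro _ ⟨t, ht, rfl⟩
  rw [le_div_iff₀' (by positivity)]
  exact two_pow_mul_boxPower_le hq hw₀ hw₁ hσ hσs ht

lemma boxPower_le_one (hσ : 0 < σ) (hσs : ∀ k, 0 < σs k) {t : ℝ} (ht : 0 ≤ t) :
    boxPower q w δ σ σs t ≤ 1 := by
  have hnonneg (k : Fin q) : 0 ≤ Phi (σ / σs k * t) - 1 / 2 :=
    sub_nonneg.2 (half_le_Phi (mul_nonneg (div_pos hσ (hσs k)).le ht))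
  have hle (k : Fin q) : Phi (σ / σs k * t) - 1 / 2 ≤ 1 := by
    linarith [Phi_le_one (σ / σs k * t)]
  exact mul_le_one₀ (Phi_le_one _) (Finset.prod_nonneg fun k _ => hnonneg k)
    (Finset.prod_le_one (fun k _ => hnonneg k) fun k _ => hle k)

lemma boxPower_pos (hσ : 0 < σ) (hσs : ∀ k, 0 < σs k) {t : ℝ} (ht : 0 < t) :
    0 < boxPower q w δ σ σs t :=
  mul_pos (Phi_pos _) <| Finset.prod_pos fun k _ =>
    sub_pos.2 (half_lt_Phi (mul_pos (div_pos hσ (hσs k)) ht))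

lemma powerBound_pos (hσ : 0 < σ) (hσs : ∀ k, 0 < σs k) : 0 < powerBound q w δ σ σs := by
  have hbdd : BddAbove (boxPower q w δ σ σs '' Set.Ici 0) :=
    ⟨1, Set.forall_mem_image.2 fun _ ht => boxPower_le_one hσ hσs ht⟩
  rw [powerBound_eq_sSup_boxPower]
  exact mul_pos (by positivity) <| (boxPower_pos hσ hσs one_pos).trans_le <|
    le_csSup hbdd (Set.mem_image_of_mem _ (Set.mem_Ici.2 zero_le_one))

end LimitLaw

theorem statement17_general {Ω : Type*} [MeasurableSpace Ω] {P : Measure Ω}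
    [IsProbabilityMeasure P] {q : ℕ} (hq : 0 < q) {θ0 δ σ : ℝ} (hσ : 0 < σ) {σs : Fin q → ℝ}
    (hσs : ∀ k, 0 < σs k) {θhat : ℕ → Ω → Fin (q + 1) → ℝ} (hmeas : ∀ n, Measurable (θhat n))
    (hconv : ∀ f : BoundedContinuousFunction (Fin (q + 1) → ℝ) ℝ,
      Tendsto (fun n : ℕ => ∫ ω, f (fun i => Real.sqrt n * (θhat n ω i - θ0)) ∂P) atTop
        (nhds (∫ x, f x ∂(limitLaw q δ σ σs))))
    {w : ℝ} (hw : w ∈ Set.Ico (0 : ℝ) 1) :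
    Tendsto (fun n : ℕ => ∫ ω, phiTest q (θhat n ω) w ∂P) atTop
        (nhds ((limitLaw q δ σ σs).real (rejectionCone q w))) ∧
      powerBound q w δ σ σs ≤ (limitLaw q δ σ σs).real (rejectionCone q w) ∧
      0 < powerBound q w δ σ σs :=
  ⟨tendsto_integral_phiTest hq (limitLaw_absolutelyContinuous hσ hσs) hmeas hconv hw.1 hw.2,
    powerBound_le hq hw.1 hw.2 hσ hσs, powerBound_pos hσ hσs⟩

/-- Theorem 2, power against local alternatives. -/
theorem statement17 {Ω : Type*} [MeasurableSpace Ω] (P : Measure Ω) [IsProbabilityMeasure P]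
    (q : ℕ) (hq : 2 ≤ q) (θ0 δ : ℝ) (hδ : 0 < δ)
    (σ : ℝ) (hσ : 0 < σ) (σs : Fin q → ℝ) (hσs : ∀ k, 0 < σs k)
    (θhat : ℕ → Ω → Fin (q + 1) → ℝ) (hmeas : ∀ n, Measurable (θhat n))
    (hconv : ∀ f : BoundedContinuousFunction (Fin (q + 1) → ℝ) ℝ,
      Tendsto (fun n : ℕ => ∫ ω, f (fun i => Real.sqrt n * (θhat n ω i - θ0)) ∂P) atTop
        (nhds (∫ x, f x ∂(Measure.pi (fun i : Fin (q + 1) =>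
          gaussianReal ((Fin.cons δ (fun _ => 0) : Fin (q + 1) → ℝ) i)
            ((Fin.cons (σ ^ 2) (fun k => (σs k) ^ 2) : Fin (q + 1) → ℝ) i).toNNReal)))))
    (w : ℝ) (hw : w ∈ Set.Ioo (0 : ℝ) 1) :
    ∃ L : ℝ, Tendsto (fun n : ℕ => ∫ ω, phiTest q (θhat n ω) w ∂P) atTop (nhds L) ∧
      powerBound q w δ σ σs ≤ L ∧ 0 < powerBound q w δ σ σs :=
  ⟨_, statement17_general (by lia) hσ hσs hmeas hconv (Set.Ioo_subset_Ico_self hw)⟩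

end
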